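/- For all x, y, z, w ∈ 𝓡 with x ∼ z and y ∼ w, one has x ⊗ y ∼ z ⊗ w. -/

import Mathlib

/-- The ambient space `𝓡` of decimal representations: an integer part together
with a sequence of digits in `{0,…,9}`. -/
abbrev DecimalRep := ℤ × (ℕ → Fin 10)

namespace DecimalRep

open scoped Classical

/-- The truncation `[x]_k = x₀ + ∑_{i=1}^k x_i / 10^i` of `x` up to the `k`-th
digit, as a rational number. -/
def trunc (x : DecimalRep) (k : ℕ) : ℚ :=
  (x.1 : ℚ) + ∑ i ∈ Finset.range k, ((x.2 i : ℕ) : ℚ) / 10 ^ (i + 1)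

/-- The order `⪯` on `𝓡`: `x ⪯ y` iff every truncation of `x` is at most the
corresponding truncation of `y`. -/
def le (x y : DecimalRep) : Prop := ∀ k : ℕ, trunc x k ≤ trunc y k

/-- The strict order `≺` on `𝓡`. -/
def lt (x y : DecimalRep) : Prop := le x y ∧ x ≠ y

/-- Two decimal representations are equivalent ("have no gap") iff there is no
third element lying between them. -/
def equiv (x y : DecimalRep) : Prop :=
  ¬ ∃ z : DecimalRep, z ≠ x ∧ z ≠ y ∧
      ((le x z ∧ le z y) ∨ (le y z ∧ le z x))

/-- `𝓡₉`: decimal representations ending in an infinite string of nines. -/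
def allNines (x : DecimalRep) : Prop := ∃ N : ℕ, ∀ k ≥ N, x.2 k = 9

/-- `ℚ_F`: decimal representations ending in an infinite string of zeros. -/
def finiteDec (x : DecimalRep) : Prop := ∃ N : ℕ, ∀ k ≥ N, x.2 k = 0

/-- The decimal expansion map `ι : ℚ → 𝓡`, satisfying
`[ι(α)]_k = ⌊10^k·α⌋/10^k` for all `k`. -/
def iota (α : ℚ) : DecimalRep :=
  (⌊α⌋, fun k => ⟨(⌊α * 10 ^ (k + 1)⌋ % 10).toNat, by
    have h1 : (0 : ℤ) ≤ ⌊α * 10 ^ (k + 1)⌋ % 10 := Int.emod_nonneg _ (by norm_num)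
    have h2 : ⌊α * 10 ^ (k + 1)⌋ % 10 < 10 := Int.emod_lt_of_pos _ (by norm_num)
    omega⟩)

/-- `M` is a least upper bound of `W` in `(𝓡,⪯)`. -/
def IsLub (W : Set DecimalRep) (M : DecimalRep) : Prop :=
  (∀ w ∈ W, le w M) ∧ ∀ M' : DecimalRep, (∀ w ∈ W, le w M') → le M M'

/-- `M` is a greatest lower bound of `W` in `(𝓡,⪯)`. -/
def IsGlb (W : Set DecimalRep) (M : DecimalRep) : Prop :=
  (∀ w ∈ W, le M w) ∧ ∀ M' : DecimalRep, (∀ w ∈ W, le M' w) → le M' M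

/-- The least upper bound of a set in `(𝓡,⪯)` (junk value if none exists). -/
noncomputable def sup (W : Set DecimalRep) : DecimalRep :=
  if h : ∃ M, IsLub W M then h.choose else default

/-- The greatest lower bound of a set in `(𝓡,⪯)` (junk value if none exists). -/
noncomputable def inf (W : Set DecimalRep) : DecimalRep :=
  if h : ∃ M, IsGlb W M then h.choose else default

/-- Addition `x ⊕ y := sup {ι([x]_k + [y]_k) : k ∈ ℕ}` on `𝓡`. -/
noncomputable def add (x y : DecimalRep) : DecimalRep :=
  sup { z | ∃ k : ℕ, z = iota (trunc x k + trunc y k) }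

/-- The "additive inverse" map `Ψ(x₀.x₁x₂⋯) = (−1−x₀).(9−x₁)(9−x₂)⋯`. -/
def psi (x : DecimalRep) : DecimalRep :=
  (-1 - x.1, fun k => ⟨9 - (x.2 k).val, by have := (x.2 k).isLt; omega⟩)

/-- The signal map: `0` on the nonnegative part, `1` on the negative part. -/
noncomputable def sign (x : DecimalRep) : ℕ :=
  if le (iota 0) x then 0 else 1

/-- The absolute value `‖x‖ := max {x, Ψ(x)}` with respect to `⪯`. -/
noncomputable def norm (x : DecimalRep) : DecimalRep :=
  if le x (psi x) then psi x else x

/-- Multiplication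
`x ⊗ y := Ψ^(sign x + sign y) (sup {ι([‖x‖]_k · [‖y‖]_k) : k ∈ ℕ})` on `𝓡`. -/
noncomputable def mul (x y : DecimalRep) : DecimalRep :=
  psi^[sign x + sign y]
    (sup { z | ∃ k : ℕ, z = iota (trunc (norm x) k * trunc (norm y) k) })

/-- The multiplicative inverse
`x⁻¹ := Ψ^(sign x) (inf {ι(1/[‖x‖]_k) : k ∈ ℕ, [‖x‖]_k > 0})`. -/
noncomputable def inv (x : DecimalRep) : DecimalRep :=
  psi^[sign x]
    (inf { z | ∃ k : ℕ, 0 < trunc (norm x) k ∧ z = iota (1 / trunc (norm x) k) })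

/-- A sequence of rationals is Cauchy. -/
def IsCauchy (x : ℕ → ℚ) : Prop :=
  ∀ ε : ℚ, 0 < ε → ∃ N : ℕ, ∀ m n : ℕ, N ≤ m → N ≤ n → |x m - x n| < ε

/-- The upper limit `inf { sup {f k : k ≥ n} : n ∈ ℕ }` of a sequence in `𝓡`. -/
noncomputable def upperLimit (f : ℕ → DecimalRep) : DecimalRep :=
  inf { z | ∃ n : ℕ, z = sup { w | ∃ k : ℕ, n ≤ k ∧ w = f k } }

/-- The lower limit `sup { inf {f k : k ≥ n} : n ∈ ℕ }` of a sequence in `𝓡`. -/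
noncomputable def lowerLimit (f : ℕ → DecimalRep) : DecimalRep :=
  sup { z | ∃ n : ℕ, z = inf { w | ∃ k : ℕ, n ≤ k ∧ w = f k } }

end DecimalRep

/-!
Every `x : 𝓡` denotes a real number `val x`. By density of `ℚ` in `ℝ`, two representations have no
gap exactly when they denote the same real number. On real values `Ψ` is negation and least upper
bounds are suprema, so `⊗` is multiplication of real numbers and only depends on the values of its
factors.
-/

namespace DecimalRep

open Filter Topology Set

/-- The integer `10^k · [x]_k`, in Horner form. It carries the integrality of truncations: distinct
`k`-th truncations differ by at least `10^{-k}`. -/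
def scaledTrunc (x : DecimalRep) : ℕ → ℤ
  | 0 => x.1
  | k + 1 => 10 * scaledTrunc x k + (x.2 k : ℕ)

lemma trunc_eq_scaledTrunc_div (x : DecimalRep) (k : ℕ) :
    trunc x k = scaledTrunc x k / 10 ^ k := by
  induction k with
  | zero => simp [trunc, scaledTrunc]
  | succ k ih =>
    have hsucc : trunc x (k + 1) = trunc x k + ((x.2 k : ℕ) : ℚ) / 10 ^ (k + 1) := by
      simp only [trunc, Finset.sum_range_succ, add_assoc]
    rw [hsucc, ih, scaledTrunc]
    push_cast
    field_simp
    ring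

lemma le_iff_scaledTrunc_le {x y : DecimalRep} :
    le x y ↔ ∀ k, scaledTrunc x k ≤ scaledTrunc y k := by
  refine forall_congr' fun k => ?_
  rw [trunc_eq_scaledTrunc_div, trunc_eq_scaledTrunc_div,
    div_le_div_iff_of_pos_right (by positivity), Int.cast_le]

lemma scaledTrunc_injective : Function.Injective scaledTrunc := by
  intro x y h
  refine Prod.ext (congrFun h 0) (funext fun k => Fin.ext ?_)
  have hk := congrFun h k
  have hsucc := congrFun h (k + 1)
  simp only [scaledTrunc] at hsucc
  omega

lemma exists_scaledTrunc_eq {n : ℕ → ℤ}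
    (hn : ∀ k, n (k + 1) ∈ Icc (10 * n k) (10 * n k + 9)) : ∃ x, scaledTrunc x = n := by
  simp only [mem_Icc] at hn
  refine ⟨(n 0, fun k => ⟨(n (k + 1) - 10 * n k).toNat, by have := hn k; omega⟩), ?_⟩
  funext k
  induction k with
  | zero => rfl
  | succ k ih =>
    have := hn k
    simp only [scaledTrunc, ih]
    omega

lemma scaledTrunc_succ_mem_Icc (x : DecimalRep) (k : ℕ) :
    scaledTrunc x (k + 1) ∈ Icc (10 * scaledTrunc x k) (10 * scaledTrunc x k + 9) := by
  have := (x.2 k).isLt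
  simp only [scaledTrunc, mem_Icc]
  omega

lemma scaledTrunc_lt_of_le {x y : DecimalRep} {j k : ℕ} (hjk : j ≤ k)
    (h : scaledTrunc x j < scaledTrunc y j) : scaledTrunc x k < scaledTrunc y k := by
  induction k, hjk using Nat.le_induction with
  | base => exact h
  | succ k _ ih =>
    have hx := (scaledTrunc_succ_mem_Icc x k).2
    have hy := (scaledTrunc_succ_mem_Icc y k).1
    omega

lemma exists_scaledTrunc_lt {x y : DecimalRep} (hle : le x y) (hne : x ≠ y) :
    ∃ k, scaledTrunc x k < scaledTrunc y k := by
  by_contra! h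
  exact hne (scaledTrunc_injective (funext fun k => (le_iff_scaledTrunc_le.1 hle k).antisymm (h k)))

lemma scaledTrunc_iota (q : ℚ) (k : ℕ) : scaledTrunc (iota q) k = ⌊q * 10 ^ k⌋ := by
  induction k with
  | zero => simp [scaledTrunc, iota]
  | succ k ih =>
    have hdigit : (((iota q).2 k : ℕ) : ℤ) = ⌊q * 10 ^ (k + 1)⌋ % 10 :=
      Int.toNat_of_nonneg (Int.emod_nonneg _ (by norm_num))
    have hfloor : ⌊q * 10 ^ k⌋ = ⌊q * 10 ^ (k + 1)⌋ / 10 := by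
      rw [← Nat.cast_ofNat (R := ℤ), ← Int.floor_div_natCast, pow_succ, Nat.cast_ofNat, ← mul_assoc,
        mul_div_cancel_right₀ _ (by norm_num)]
    rw [scaledTrunc, ih, hdigit, hfloor, Int.mul_ediv_add_emod]

lemma scaledTrunc_psi (x : DecimalRep) (k : ℕ) :
    scaledTrunc (psi x) k = -scaledTrunc x k - 1 := by
  induction k with
  | zero => simp only [scaledTrunc, psi]; ring
  | succ k ih =>
    have := (x.2 k).isLt
    simp only [scaledTrunc, ih]
    simp only [psi]
    omega

lemma trunc_monotone (x : DecimalRep) : Monotone (trunc x) := by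
  intro i j hij
  unfold trunc
  gcongr

lemma trunc_nonneg {x : DecimalRep} (hx : 0 ≤ x.1) (k : ℕ) : 0 ≤ trunc x k :=
  calc (0 : ℚ) ≤ x.1 := mod_cast hx
    _ = trunc x 0 := by simp [trunc]
    _ ≤ trunc x k := trunc_monotone x k.zero_le

/-- The real number `x₀.x₁x₂x₃⋯` denoted by a decimal representation, used to transfer questions
about `∼` and `⊗` to `ℝ`. The digit `x_{k+1}` is `x.2 k`, as in `Real.ofDigits`. -/
noncomputable def val (x : DecimalRep) : ℝ := x.1 + Real.ofDigits x.2

lemma val_eq_trunc_add (x : DecimalRep) (k : ℕ) :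
    val x = trunc x k + (10 ^ k)⁻¹ * Real.ofDigits fun i => x.2 (i + k) := by
  rw [val, Real.ofDigits_eq_sum_add_ofDigits x.2 k, trunc]
  push_cast
  simp only [Real.ofDigitsTerm, div_eq_mul_inv, add_assoc, Nat.cast_ofNat]

lemma val_mul_pow_mem_Icc (x : DecimalRep) (k : ℕ) :
    val x * 10 ^ k ∈ Icc (scaledTrunc x k : ℝ) (scaledTrunc x k + 1) := by
  have hval : val x * 10 ^ k = scaledTrunc x k + Real.ofDigits fun i => x.2 (i + k) := by
    rw [val_eq_trunc_add x k, trunc_eq_scaledTrunc_div]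
    push_cast
    field_simp
  rw [hval]
  exact ⟨le_add_of_nonneg_right (Real.ofDigits_nonneg _),
    add_le_add_right (Real.ofDigits_le_one _) _⟩

lemma tendsto_trunc_of_mem_Icc {x : DecimalRep} {r : ℝ}
    (hr : ∀ k, r * 10 ^ k ∈ Icc (scaledTrunc x k : ℝ) (scaledTrunc x k + 1)) :
    Tendsto (fun k => (trunc x k : ℝ)) atTop (𝓝 r) := by
  have hlower : Tendsto (fun k : ℕ => r - (1 / 10 : ℝ) ^ k) atTop (𝓝 r) := by
    simpa using (tendsto_pow_atTop_nhds_zero_of_lt_one (r := (1 / 10 : ℝ))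
      (by norm_num) (by norm_num)).const_sub r
  have htrunc (k : ℕ) : (trunc x k : ℝ) = scaledTrunc x k / 10 ^ k := by
    rw [trunc_eq_scaledTrunc_div]
    push_cast
    rfl
  refine tendsto_of_tendsto_of_tendsto_of_le_of_le hlower tendsto_const_nhds (fun k => ?_)
    fun k => ?_
  · change r - (1 / 10 : ℝ) ^ k ≤ trunc x k
    rw [htrunc, one_div_pow, sub_le_iff_le_add, ← add_div, le_div_iff₀ (by positivity)]
    exact (hr k).2
  · change (trunc x k : ℝ) ≤ r
    rw [htrunc, div_le_iff₀ (by positivity)]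
    exact (hr k).1

lemma tendsto_trunc (x : DecimalRep) : Tendsto (fun k => (trunc x k : ℝ)) atTop (𝓝 (val x)) :=
  tendsto_trunc_of_mem_Icc (val_mul_pow_mem_Icc x)

lemma val_eq_of_mem_Icc {x : DecimalRep} {r : ℝ}
    (hr : ∀ k, r * 10 ^ k ∈ Icc (scaledTrunc x k : ℝ) (scaledTrunc x k + 1)) : val x = r :=
  tendsto_nhds_unique (tendsto_trunc x) (tendsto_trunc_of_mem_Icc hr)

lemma val_iota (q : ℚ) : val (iota q) = q := by
  refine val_eq_of_mem_Icc fun k => ?_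
  rw [scaledTrunc_iota]
  exact ⟨mod_cast Int.floor_le (q * 10 ^ k), mod_cast (Int.lt_floor_add_one (q * 10 ^ k)).le⟩

lemma val_psi (x : DecimalRep) : val (psi x) = -val x := by
  refine val_eq_of_mem_Icc fun k => ?_
  obtain ⟨hlower, hupper⟩ := val_mul_pow_mem_Icc x k
  rw [scaledTrunc_psi]
  push_cast
  constructor <;> linarith

lemma val_psi_iterate (n : ℕ) (x : DecimalRep) : val (psi^[n] x) = (-1) ^ n * val x := by
  induction n with
  | zero => simp
  | succ n ih => rw [Function.iterate_succ_apply', val_psi, ih]; ring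

lemma le_of_val_lt {x y : DecimalRep} (h : val x < val y) : le x y := by
  rw [le_iff_scaledTrunc_le]
  by_contra! ⟨k, hk⟩
  refine h.not_ge (le_of_mul_le_mul_right ?_ (by positivity : (0 : ℝ) < 10 ^ k))
  calc val y * 10 ^ k ≤ scaledTrunc y k + 1 := (val_mul_pow_mem_Icc y k).2
    _ ≤ scaledTrunc x k := mod_cast hk
    _ ≤ val x * 10 ^ k := (val_mul_pow_mem_Icc x k).1

lemma val_le_of_le {x y : DecimalRep} (h : le x y) : val x ≤ val y :=
  le_of_tendsto_of_tendsto' (tendsto_trunc x) (tendsto_trunc y) fun k => mod_cast h k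

lemma val_lt_val_of_between {x y z : DecimalRep} (hxz : le x z) (hzy : le z y) (hne_x : z ≠ x)
    (hne_y : z ≠ y) : val x < val y := by
  obtain ⟨i, hi⟩ := exists_scaledTrunc_lt hxz hne_x.symm
  obtain ⟨j, hj⟩ := exists_scaledTrunc_lt hzy hne_y
  -- Once `z` has been separated from both `x` and `y`, the scaled truncations of `x` and `y` are at
  -- least `2` apart, which exceeds the error `1` of a scaled truncation.
  let k := max i j
  have hxz_k : scaledTrunc x k < scaledTrunc z k := scaledTrunc_lt_of_le (le_max_left i j) hi
  have hzy_k : scaledTrunc z k < scaledTrunc y k := scaledTrunc_lt_of_le (le_max_right i j) hj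
  refine lt_of_mul_lt_mul_right ?_ (by positivity : (0 : ℝ) ≤ 10 ^ k)
  calc val x * 10 ^ k ≤ scaledTrunc x k + 1 := (val_mul_pow_mem_Icc x k).2
    _ < scaledTrunc y k := by norm_cast; omega
    _ ≤ val y * 10 ^ k := (val_mul_pow_mem_Icc y k).1

lemma exists_between_of_val_lt {x y : DecimalRep} (h : val x < val y) :
    ∃ z, z ≠ x ∧ z ≠ y ∧ le x z ∧ le z y := by
  obtain ⟨q, hxq, hqy⟩ := exists_rat_btwn h
  rw [← val_iota q] at hxq hqy
  exact ⟨iota q, ne_of_apply_ne val hxq.ne', ne_of_apply_ne val hqy.ne,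
    le_of_val_lt hxq, le_of_val_lt hqy⟩

lemma equiv_iff_val_eq {x y : DecimalRep} : equiv x y ↔ val x = val y := by
  constructor
  · intro h
    by_contra hne
    rcases lt_or_gt_of_ne hne with hlt | hgt
    · obtain ⟨z, hne_x, hne_y, hxz, hzy⟩ := exists_between_of_val_lt hlt
      exact h ⟨z, hne_x, hne_y, .inl ⟨hxz, hzy⟩⟩
    · obtain ⟨z, hne_y, hne_x, hyz, hzx⟩ := exists_between_of_val_lt hgt
      exact h ⟨z, hne_x, hne_y, .inr ⟨hyz, hzx⟩⟩
  · rintro h ⟨z, hne_x, hne_y, ⟨hxz, hzy⟩ | ⟨hyz, hzx⟩⟩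
    · exact (val_lt_val_of_between hxz hzy hne_x hne_y).ne h
    · exact (val_lt_val_of_between hyz hzx hne_y hne_x).ne' h

lemma exists_isLub {W : Set DecimalRep} (hne : W.Nonempty) (hbdd : ∃ b, ∀ w ∈ W, le w b) :
    ∃ m, IsLub W m := by
  have hmax (k : ℕ) : ∃ n, IsGreatest ((scaledTrunc · k) '' W) n := by
    obtain ⟨b, hb⟩ := hbdd
    have hbddAbove : BddAbove ((scaledTrunc · k) '' W) :=
      ⟨scaledTrunc b k, forall_mem_image.2 fun w hw => le_iff_scaledTrunc_le.1 (hb w hw) k⟩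
    exact ⟨_, Int.csSup_mem (hne.image _) hbddAbove, fun _ h => le_csSup hbddAbove h⟩
  choose n hn using hmax
  have hn_le {w : DecimalRep} (hw : w ∈ W) (k : ℕ) : scaledTrunc w k ≤ n k :=
    (hn k).2 (mem_image_of_mem _ hw)
  obtain ⟨m, hm⟩ : ∃ m, scaledTrunc m = n := by
    refine exists_scaledTrunc_eq fun k => ⟨?_, ?_⟩
    · obtain ⟨w, hw, hwk⟩ := (hn k).1
      have := (scaledTrunc_succ_mem_Icc w k).1
      have := hn_le hw (k + 1)
      dsimp only at hwk
      omega
    · obtain ⟨w, hw, hwk⟩ := (hn (k + 1)).1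
      have := (scaledTrunc_succ_mem_Icc w k).2
      have := hn_le hw k
      dsimp only at hwk
      omega
  refine ⟨m, fun w hw => le_iff_scaledTrunc_le.2 fun k => hm ▸ hn_le hw k, fun b hb => ?_⟩
  refine le_iff_scaledTrunc_le.2 fun k => ?_
  obtain ⟨w, hw, hwk⟩ := (hn k).1
  rw [hm, ← hwk]
  exact le_iff_scaledTrunc_le.1 (hb w hw) k

lemma isLub_sup {W : Set DecimalRep} (hne : W.Nonempty) (hbdd : ∃ b, ∀ w ∈ W, le w b) :
    IsLub W (sup W) := by
  have h := exists_isLub hne hbdd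
  rw [sup, dif_pos h]
  exact h.choose_spec

lemma IsLub.isLUB_val {W : Set DecimalRep} {m : DecimalRep} (h : IsLub W m) :
    IsLUB (val '' W) (val m) := by
  refine ⟨forall_mem_image.2 fun w hw => val_le_of_le (h.1 w hw), fun b hb => ?_⟩
  by_contra! hbm
  obtain ⟨q, hbq, hqm⟩ := exists_rat_btwn hbm
  have hmq : le m (iota q) := h.2 (iota q) fun w hw => le_of_val_lt <| by
    rw [val_iota]
    exact (hb (mem_image_of_mem val hw)).trans_lt hbq
  exact (val_iota q ▸ val_le_of_le hmq).not_gt hqm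

lemma val_sup_iota {κ : Type*} [Nonempty κ] {p : κ → ℚ} {r : ℝ}
    (hr : IsLUB (range fun i => (p i : ℝ)) r) : val (sup {z | ∃ i, z = iota (p i)}) = r := by
  obtain ⟨b, hb⟩ := exists_rat_gt r
  have hW : {z | ∃ i, z = iota (p i)} = range fun i => iota (p i) := by
    simp only [range, eq_comm]
  have hbdd : ∀ w ∈ range fun i => iota (p i), le w (iota b) :=
    forall_mem_range.2 fun i => le_of_val_lt <| by
      simpa only [val_iota] using (hr.1 (mem_range_self i)).trans_lt hb
  have hsup := (isLub_sup (range_nonempty _) ⟨_, hbdd⟩).isLUB_val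
  rw [← range_comp] at hsup
  simp only [Function.comp_def, val_iota] at hsup
  rw [hW]
  exact hsup.unique hr

lemma iota_zero_le_iff {x : DecimalRep} : le (iota 0) x ↔ 0 ≤ x.1 := by
  have htrunc (k : ℕ) : trunc (iota 0) k = 0 := by
    simp [trunc_eq_scaledTrunc_div, scaledTrunc_iota]
  simp only [le, htrunc]
  exact ⟨fun h => by simpa [trunc] using h 0, trunc_nonneg⟩

lemma le_psi_self_iff {x : DecimalRep} : le x (psi x) ↔ x.1 < 0 := by
  have hzero : scaledTrunc (psi x) 0 = -x.1 - 1 := scaledTrunc_psi x 0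
  constructor
  · intro h
    have hle : x.1 ≤ scaledTrunc (psi x) 0 := le_iff_scaledTrunc_le.1 h 0
    omega
  · intro h
    have hlt : x.1 < scaledTrunc (psi x) 0 := by omega
    exact le_iff_scaledTrunc_le.2 fun k => (scaledTrunc_lt_of_le k.zero_le hlt).le

lemma norm_fst_nonneg (x : DecimalRep) : 0 ≤ (norm x).1 := by
  rw [norm]
  split_ifs with h <;> rw [le_psi_self_iff] at h
  · simp only [psi]
    omega
  · exact not_lt.1 h

lemma neg_one_pow_sign_mul_val_norm (x : DecimalRep) :
    (-1) ^ sign x * val (norm x) = val x := by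
  simp only [sign, norm, iota_zero_le_iff, le_psi_self_iff]
  by_cases h : 0 ≤ x.1
  · simp [h, not_lt.2 h]
  · simp [h, not_le.1 h, val_psi]

lemma val_mul (x y : DecimalRep) : val (mul x y) = val x * val y := by
  have hmono : Monotone fun k => ((trunc (norm x) k * trunc (norm y) k : ℚ) : ℝ) :=
    Rat.cast_mono.comp <| (trunc_monotone _).mul (trunc_monotone _)
      (trunc_nonneg (norm_fst_nonneg x)) (trunc_nonneg (norm_fst_nonneg y))
  have hlim : Tendsto (fun k => ((trunc (norm x) k * trunc (norm y) k : ℚ) : ℝ)) atTop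
      (𝓝 (val (norm x) * val (norm y))) := by
    simpa only [Rat.cast_mul] using (tendsto_trunc (norm x)).mul (tendsto_trunc (norm y))
  calc val (mul x y)
      = (-1) ^ (sign x + sign y) * (val (norm x) * val (norm y)) := by
        rw [mul, val_psi_iterate, val_sup_iota (isLUB_of_tendsto_atTop hmono hlim)]
    _ = ((-1) ^ sign x * val (norm x)) * ((-1) ^ sign y * val (norm y)) := by ring
    _ = val x * val y := by simp only [neg_one_pow_sign_mul_val_norm]

end DecimalRep

open DecimalRep in
/-- Multiplication on `𝓡` respects the equivalence `∼`. -/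
theorem mul_equiv_mul (x y z w : DecimalRep) (hxz : equiv x z) (hyw : equiv y w) :
    equiv (mul x y) (mul z w) := by
  rw [equiv_iff_val_eq] at hxz hyw ⊢
  rw [val_mul, val_mul, hxz, hyw]
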